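/- arXiv:2203.11190 — 2 statements merged into one kernel-verified Lean document; each statement's English description precedes it below -/
import Mathlib

section
/- Let L be an n×n real symmetric positive semidefinite matrix, let K = L(I+L)^{−1}, and suppose that the largest eigenvalue of K satisfies λ_max(K) ≤ λ for some λ ∈ [0,1). Let α ∈ [0,1), let T ⊆ [n] be such that L_{T,T} is invertible, let T̃ = [n]∖T, and define L' = (1−α)·(L_{T̃,T̃} − L_{T̃,T}·L_{T,T}^{−1}·L_{T,T̃}) and K' = I − (I+L')^{−1} (identity matrices of size |T̃|). Then L' is symmetric positive semidefinite and λ_max(K') ≤ λ. -/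
open Finset Matrix

/-!
The bound `K ⪯ λ I` on the marginal kernel `K = L (I + L)⁻¹` is the same as the bound
`(1 - λ) L ⪯ λ I` on the ensemble matrix: the difference of the two sides of the second is that of
the first times `I + L`, a positive definite matrix commuting with it. In the second form the bound
visibly passes to principal submatrices and to smaller positive semidefinite matrices (it is
automatic once `λ ≥ 1`), and the update `(1 - α) (L_{T̃,T̃} - L_{T̃,T} L_{T,T}⁻¹ L_{T,T̃})` lies
between `0` and `L_{T̃,T̃}`.
-/

section

open scoped ComplexOrder MatrixOrder

variable {𝕜 n s t : Type*} [RCLike 𝕜]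

lemma conjTranspose_submatrix_eq_of_isHermitian {R : Type*} [Star R] {L : Matrix n n R}
    (hL : L.IsHermitian) (f : s → n) (g : t → n) : (L.submatrix f g)ᴴ = L.submatrix g f := by
  rw [conjTranspose_submatrix, hL.eq]

lemma posDef_one_add [DecidableEq n] {L : Matrix n n 𝕜} (hL : L.PosSemidef) : (1 + L).PosDef :=
  PosDef.one.add_posSemidef hL

variable [Fintype s] [DecidableEq s]

/-- The Schur complement `L_{g,g} - L_{g,f} L_{f,f}⁻¹ L_{f,g}` of the block of `L` indexed by `f`
in the block indexed by `f` and `g`. For `f` and `g` the inclusions of `T` and of its complement,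
it is the ensemble matrix of the determinantal point process conditioned on containing `T`. It is
meaningful only when `L_{f,f}` is invertible. -/
noncomputable def schurComplement (L : Matrix n n 𝕜) (f : s → n) (g : t → n) : Matrix t t 𝕜 :=
  L.submatrix g g - L.submatrix g f * (L.submatrix f f)⁻¹ * L.submatrix f g

lemma posSemidef_schurComplement [Finite t] {L : Matrix n n 𝕜} (hL : L.PosSemidef) {f : s → n}
    (hf : IsUnit (L.submatrix f f)) (g : t → n) : (schurComplement L f g).PosSemidef := by
  have hff : (L.submatrix f f).PosDef := (hL.submatrix f).posDef_iff_isUnit.2 hf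
  have hgf : (L.submatrix f g)ᴴ = L.submatrix g f :=
    conjTranspose_submatrix_eq_of_isHermitian hL.isHermitian f g
  have hblocks : L.submatrix (Sum.elim f g) (Sum.elim f g) = fromBlocks (L.submatrix f f)
      (L.submatrix f g) (L.submatrix f g)ᴴ (L.submatrix g g) := by
    rw [hgf]
    ext (i | i) (j | j) <;> rfl
  have := hf.invertible
  rw [schurComplement, ← hgf, ← PosDef.fromBlocks₁₁ _ _ hff, ← hblocks]
  exact hL.submatrix _

lemma schurComplement_le_submatrix [Finite t] {L : Matrix n n 𝕜} (hL : L.PosSemidef)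
    (f : s → n) (g : t → n) : schurComplement L f g ≤ L.submatrix g g := by
  have hgf : (L.submatrix f g)ᴴ = L.submatrix g f :=
    conjTranspose_submatrix_eq_of_isHermitian hL.isHermitian f g
  rw [schurComplement, le_iff, sub_sub_cancel, ← hgf]
  exact (hL.submatrix f).inv.conjTranspose_mul_mul_same _

variable [Fintype n]

lemma mul_nonneg_iff_of_posDef_right {A P : Matrix n n 𝕜} (hP : P.PosDef) (hAP : Commute A P) :
    0 ≤ A * P ↔ 0 ≤ A := by
  classical
  have hdet : IsUnit P.det := (isUnit_iff_isUnit_det P).1 hP.isUnit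
  refine ⟨fun h => ?_, fun h => hAP.mul_nonneg h hP.posSemidef.nonneg⟩
  have hcomm : Commute (A * P) P⁻¹ := by
    rw [Commute, SemiconjBy, mul_nonsing_inv_cancel_right _ _ hdet, hAP.eq,
      nonsing_inv_mul_cancel_left _ _ hdet]
  simpa only [mul_nonsing_inv_cancel_right _ _ hdet] using
    hcomm.mul_nonneg h hP.inv.posSemidef.nonneg

variable [DecidableEq n]

/-- The marginal kernel `K = L (I + L)⁻¹` of the determinantal point process with ensemble
matrix `L`: for `L ⪰ 0`, its principal minors are the inclusion probabilities of the process. The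
inverse is the genuine one whenever `L ⪰ 0`, since `I + L` is then positive definite. -/
noncomputable def marginalKernel (L : Matrix n n 𝕜) : Matrix n n 𝕜 :=
  L * (1 + L)⁻¹

lemma isUnit_det_one_add {L : Matrix n n 𝕜} (hL : L.PosSemidef) : IsUnit (1 + L).det :=
  (isUnit_iff_isUnit_det _).1 (posDef_one_add hL).isUnit

lemma marginalKernel_eq_one_sub_inv {L : Matrix n n 𝕜} (hL : L.PosSemidef) :
    marginalKernel L = 1 - (1 + L)⁻¹ :=
  calc L * (1 + L)⁻¹ = (1 + L) * (1 + L)⁻¹ - (1 + L)⁻¹ := by noncomm_ring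
    _ = 1 - (1 + L)⁻¹ := by rw [mul_nonsing_inv _ (isUnit_det_one_add hL)]

lemma marginalKernel_le_smul_one_iff {L : Matrix n n 𝕜} (hL : L.PosSemidef) {c : ℝ} :
    marginalKernel L ≤ c • 1 ↔ (1 - c) • L ≤ c • 1 := by
  have hcomm : Commute (c • 1 - marginalKernel L) (1 + L) := by
    have hinv : Commute (1 + L)⁻¹ (1 + L) := by
      rw [Commute, SemiconjBy, nonsing_inv_mul _ (isUnit_det_one_add hL),
        mul_nonsing_inv _ (isUnit_det_one_add hL)]
    rw [marginalKernel_eq_one_sub_inv hL]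
    exact ((Commute.one_left _).smul_left c).sub_left ((Commute.one_left _).sub_left hinv)
  have hmul : (c • 1 - marginalKernel L) * (1 + L) = c • 1 - (1 - c) • L := by
    rw [marginalKernel, sub_mul, nonsing_inv_mul_cancel_right _ _ (isUnit_det_one_add hL),
      smul_one_mul]
    module
  rw [← sub_nonneg, ← mul_nonneg_iff_of_posDef_right (posDef_one_add hL) hcomm, hmul, sub_nonneg]

lemma marginalKernel_le_smul_one_of_le {A B : Matrix n n 𝕜} (hA : A.PosSemidef) (hAB : A ≤ B)
    {c : ℝ} (hB : marginalKernel B ≤ c • 1) : marginalKernel A ≤ c • 1 := by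
  have hB₀ : B.PosSemidef := (hA.nonneg.trans hAB).posSemidef
  rw [marginalKernel_le_smul_one_iff hA]
  rcases le_total c 1 with hc | hc
  · calc (1 - c) • A ≤ (1 - c) • B := smul_le_smul_of_nonneg_left hAB (sub_nonneg.2 hc)
      _ ≤ c • 1 := (marginalKernel_le_smul_one_iff hB₀).1 hB
  · calc (1 - c) • A ≤ 0 := smul_nonpos_of_nonpos_of_nonneg (sub_nonpos.2 hc) hA.nonneg
      _ ≤ c • 1 := smul_nonneg (zero_le_one.trans hc) PosSemidef.one.nonneg

lemma marginalKernel_submatrix_le_smul_one [Fintype t] [DecidableEq t] {L : Matrix n n 𝕜}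
    (hL : L.PosSemidef) {g : t → n} (hg : Function.Injective g) {c : ℝ}
    (hc : marginalKernel L ≤ c • 1) : marginalKernel (L.submatrix g g) ≤ c • 1 := by
  rw [marginalKernel_le_smul_one_iff hL, le_iff] at hc
  rw [marginalKernel_le_smul_one_iff (hL.submatrix g), le_iff]
  simpa only [submatrix_sub, submatrix_smul, submatrix_one g hg, Pi.sub_apply, Pi.smul_apply]
    using hc.submatrix g

theorem filtered_kernel_eigenvalue_bound_general [Fintype t] [DecidableEq t]
    {L : Matrix n n 𝕜} (hL : L.PosSemidef) {c : ℝ} (hc : marginalKernel L ≤ c • 1)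
    {α : ℝ} (hα : α ∈ Set.Icc 0 1) {f : s → n} {g : t → n} (hf : IsUnit (L.submatrix f f))
    (hg : Function.Injective g) :
    ((1 - α) • schurComplement L f g).PosSemidef ∧
      marginalKernel ((1 - α) • schurComplement L f g) ≤ c • 1 := by
  have hS : (schurComplement L f g).PosSemidef := posSemidef_schurComplement hL hf g
  have hS' : ((1 - α) • schurComplement L f g).PosSemidef := hS.smul (sub_nonneg.2 hα.2)
  have hle : (1 - α) • schurComplement L f g ≤ L.submatrix g g :=
    calc (1 - α) • schurComplement L f g ≤ schurComplement L f g :=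
          smul_le_of_le_one_left hS.nonneg (sub_le_self 1 hα.1)
      _ ≤ L.submatrix g g := schurComplement_le_submatrix hL f g
  exact ⟨hS', marginalKernel_le_smul_one_of_le hS' hle
    (marginalKernel_submatrix_le_smul_one hL hg hc)⟩

end

/-- The spectral bound on the marginal kernel of a symmetric DPP is
preserved under the scale-and-condition update of the filtering algorithm: if
`K = L(I+L)⁻¹` satisfies `λ_max(K) ≤ λ` (i.e. `K ⪯ λI`), then with
`L' = (1−α)·(L_{T̃,T̃} − L_{T̃,T} L_{T,T}⁻¹ L_{T,T̃})` and `K' = I − (I+L')⁻¹`,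
`L'` is symmetric PSD and `λ_max(K') ≤ λ` (i.e. `K' ⪯ λI`). -/
theorem filtered_kernel_eigenvalue_bound (n : ℕ)
    (L : Matrix (Fin n) (Fin n) ℝ) (hL : L.PosSemidef)
    (lam : ℝ) (hlam : lam ∈ Set.Ico (0 : ℝ) 1)
    (hKbound : ((lam • (1 : Matrix (Fin n) (Fin n) ℝ)) - L * (1 + L)⁻¹).PosSemidef)
    (α : ℝ) (hα : α ∈ Set.Ico (0 : ℝ) 1)
    (T : Finset (Fin n))
    (hTinv : IsUnit (L.submatrix (fun i : {x // x ∈ T} => (i : Fin n))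
      (fun j : {x // x ∈ T} => (j : Fin n))))
    (L' K' : Matrix {x // x ∈ Tᶜ} {x // x ∈ Tᶜ} ℝ)
    (hL' : L' = (1 - α) •
      (L.submatrix (fun i : {x // x ∈ Tᶜ} => (i : Fin n))
          (fun j : {x // x ∈ Tᶜ} => (j : Fin n)) -
        L.submatrix (fun i : {x // x ∈ Tᶜ} => (i : Fin n))
            (fun j : {x // x ∈ T} => (j : Fin n)) *
          (L.submatrix (fun i : {x // x ∈ T} => (i : Fin n))
            (fun j : {x // x ∈ T} => (j : Fin n)))⁻¹ *
          L.submatrix (fun i : {x // x ∈ T} => (i : Fin n))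
            (fun j : {x // x ∈ Tᶜ} => (j : Fin n))))
    (hK' : K' = 1 - (1 + L')⁻¹) :
    L'.PosSemidef ∧
      ((lam • (1 : Matrix {x // x ∈ Tᶜ} {x // x ∈ Tᶜ} ℝ)) - K').PosSemidef := by
  obtain ⟨hL'₀, hbound⟩ := filtered_kernel_eigenvalue_bound_general hL hKbound
    (Set.Ico_subset_Icc_self hα) hTinv (g := fun j : {x // x ∈ Tᶜ} => (j : Fin n))
    Subtype.val_injective
  rw [schurComplement, ← hL'] at hL'₀ hbound
  rw [marginalKernel_eq_one_sub_inv hL'₀, ← hK'] at hbound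
  exact ⟨hL'₀, hbound⟩
end

section
/- Let K be an n×n real symmetric matrix with 0 ⪯ K ⪯ λI for some λ ∈ [0,1), and let L = K(I−K)^{−1}. Then for every T ⊆ [n], det(L_{T,T}) ≤ (1−λ)^{−|T|}·det(K_{T,T}), where L_{T,T} and K_{T,T} denote the principal submatrices indexed by T (det of the empty matrix is 1). -/
open Finset Matrix

/-! On the spectrum of `K`, which lies in `[0, λ]`, the function `x / (1 - x)` is squeezed between
`0` and `x / (1 - λ)`. Functional calculus turns this into `0 ⪯ L ⪯ (1 - λ)⁻¹ K` in the Loewner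
order, a relation inherited by principal submatrices. The determinant is monotone on positive
semidefinite matrices: if `A = C⋆C ⪯ B` with `C` invertible, then `B = C⋆NC` with `N ⪰ I`, whose
eigenvalues are all at least `1`. -/

section

open scoped MatrixOrder ComplexOrder

variable {ι κ 𝕜 : Type*} [RCLike 𝕜]

lemma submatrix_le_submatrix {A B : Matrix ι ι 𝕜} (hAB : A ≤ B) (e : κ → ι) :
    A.submatrix e e ≤ B.submatrix e e :=
  PosSemidef.submatrix hAB e

variable [Fintype ι] [DecidableEq ι]

lemma one_le_det_of_one_le {A : Matrix ι ι 𝕜} (hA : 1 ≤ A) : 1 ≤ A.det := by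
  have hherm : A.IsHermitian := (zero_le_one.trans hA).posSemidef.isHermitian
  have heig (i : ι) : 1 ≤ hherm.eigenvalues i :=
    (CFC.one_le_iff (R := ℝ) A hherm.isSelfAdjoint).mp hA _
      (hherm.eigenvalues_mem_spectrum_real i)
  rw [hherm.det_eq_prod_eigenvalues]
  exact_mod_cast Finset.one_le_prod fun i _ => heig i

lemma det_le_det_of_nonneg_of_le {A B : Matrix ι ι 𝕜} (hA : 0 ≤ A) (hAB : A ≤ B) :
    A.det ≤ B.det := by
  by_cases hdet : A.det = 0
  · exact hdet ▸ (hA.trans hAB).posSemidef.det_nonneg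
  obtain ⟨C, rfl⟩ := CStarAlgebra.nonneg_iff_eq_star_mul_self.mp hA
  have hC : IsUnit C.det := (right_ne_zero_of_mul (det_mul (star C) C ▸ hdet)).isUnit
  have hinv : C * C⁻¹ = 1 := mul_nonsing_inv C hC
  have hstarinv : star C⁻¹ * star C = 1 := by rw [← star_mul, hinv, star_one]
  have hN : 1 ≤ star C⁻¹ * B * C⁻¹ := by
    calc 1 = star C⁻¹ * (star C * C) * C⁻¹ := by
          rw [← mul_assoc, hstarinv, one_mul, hinv]
      _ ≤ star C⁻¹ * B * C⁻¹ := star_left_conjugate_le_conjugate hAB C⁻¹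
  have hdetB : (star C * C).det * (star C⁻¹ * B * C⁻¹).det = B.det := by
    have hdetC : C.det * C⁻¹.det = 1 := by rw [← det_mul, hinv, det_one]
    have hdetStar : (star C⁻¹).det * (star C).det = 1 := by rw [← det_mul, hstarinv, det_one]
    simp only [det_mul]
    linear_combination B.det * (star C⁻¹).det * (star C).det * hdetC + B.det * hdetStar
  exact hdetB ▸ le_mul_of_one_le_right hA.posSemidef.det_nonneg (one_le_det_of_one_le hN)

lemma spectrum_subset_Icc_of_nonneg_of_le {K : Matrix ι ι 𝕜} {lam : ℝ} (hK0 : 0 ≤ K)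
    (hKlam : K ≤ lam • 1) : spectrum ℝ K ⊆ Set.Icc 0 lam := fun x hx =>
  ⟨spectrum_nonneg_of_nonneg hK0 hx,
    (le_algebraMap_iff_spectrum_le (ha := .of_nonneg hK0)).mp
      (by rwa [Algebra.algebraMap_eq_smul_one]) x hx⟩

/-- The ensemble matrix `L = K(I - K)⁻¹` of the determinantal point process with marginal kernel
`K`. If `I - K` is singular, the matrix inverse is `0` by convention, and so is `L`. -/
noncomputable def ensembleMatrix (K : Matrix ι ι 𝕜) : Matrix ι ι 𝕜 :=
  K * (1 - K)⁻¹

lemma ensembleMatrix_eq_cfc {K : Matrix ι ι 𝕜} (hK : K.IsHermitian) (hone : 1 ∉ spectrum ℝ K) :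
    ensembleMatrix K = cfc (fun x : ℝ => x * (1 - x)⁻¹) K := by
  have hcont (f : ℝ → ℝ) : ContinuousOn f (spectrum ℝ K) := K.finite_real_spectrum.continuousOn f
  have hsub : cfc (fun x : ℝ => 1 - x) K = 1 - K := by
    rw [cfc_sub .., cfc_const_one .., cfc_id' ..]
  have hinv : (1 - K)⁻¹ = cfc (fun x : ℝ => (1 - x)⁻¹) K := by
    refine inv_eq_right_inv ?_
    rw [← hsub, ← cfc_mul _ _ K (hcont _) (hcont _), ← cfc_const_one ℝ K]
    exact cfc_congr fun x hx => mul_inv_cancel₀ (sub_ne_zero.mpr fun h => hone (h ▸ hx))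
  rw [ensembleMatrix, hinv, cfc_mul _ _ K (hcont _) (hcont _), cfc_id' ..]

lemma ensembleMatrix_mem_Icc {K : Matrix ι ι 𝕜} {lam : ℝ} (hlam : lam < 1) (hK0 : 0 ≤ K)
    (hKlam : K ≤ lam • 1) : ensembleMatrix K ∈ Set.Icc 0 ((1 - lam)⁻¹ • K) := by
  have hspec := spectrum_subset_Icc_of_nonneg_of_le hK0 hKlam
  have hsa : IsSelfAdjoint K := .of_nonneg hK0
  have hcont (f : ℝ → ℝ) : ContinuousOn f (spectrum ℝ K) := K.finite_real_spectrum.continuousOn f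
  rw [ensembleMatrix_eq_cfc hsa fun h => (hspec h).2.not_gt hlam,
    ← cfc_const_mul_id (1 - lam)⁻¹ K]
  have hpos : 0 < 1 - lam := sub_pos.mpr hlam
  constructor
  · refine cfc_nonneg fun x hx => ?_
    obtain ⟨hx0, hxlam⟩ := hspec hx
    exact mul_nonneg hx0 (inv_nonneg.mpr (hpos.le.trans (sub_le_sub_left hxlam 1)))
  · refine cfc_mono (fun x hx => ?_) (hcont _) (hcont _)
    obtain ⟨hx0, hxlam⟩ := hspec hx
    rw [mul_comm]
    gcongr

theorem ensemble_minor_bound_general [Fintype κ] [DecidableEq κ] {K : Matrix ι ι 𝕜} {lam : ℝ}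
    (hlam : lam < 1) (hK0 : 0 ≤ K) (hKlam : K ≤ lam • 1) (e : κ → ι) :
    ((ensembleMatrix K).submatrix e e).det ≤
      (1 - lam)⁻¹ ^ Fintype.card κ • (K.submatrix e e).det := by
  obtain ⟨hL0, hLK⟩ := ensembleMatrix_mem_Icc hlam hK0 hKlam
  rw [← det_smul_of_tower]
  exact det_le_det_of_nonneg_of_le (submatrix_le_submatrix hL0 e) (submatrix_le_submatrix hLK e)

end

/-- For a symmetric kernel `0 ⪯ K ⪯ λI` with `λ < 1` and ensemble matrix
`L = K(I−K)⁻¹`, every principal minor of `L` satisfies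
`det(L_{T,T}) ≤ (1−λ)^{−|T|}·det(K_{T,T})`. -/
theorem ensemble_minor_bound (n : ℕ)
    (K : Matrix (Fin n) (Fin n) ℝ)
    (lam : ℝ) (hlam : lam ∈ Set.Ico (0 : ℝ) 1)
    (hK0 : K.PosSemidef)
    (hKlam : ((lam • (1 : Matrix (Fin n) (Fin n) ℝ)) - K).PosSemidef)
    (L : Matrix (Fin n) (Fin n) ℝ) (hL : L = K * (1 - K)⁻¹) :
    ∀ T : Finset (Fin n),
      (L.submatrix (fun i : {x // x ∈ T} => (i : Fin n))
        (fun j : {x // x ∈ T} => (j : Fin n))).det ≤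
      (1 - lam)⁻¹ ^ T.card *
        (K.submatrix (fun i : {x // x ∈ T} => (i : Fin n))
          (fun j : {x // x ∈ T} => (j : Fin n))).det := by
  intro T
  simpa only [hL, ensembleMatrix, Fintype.card_coe, smul_eq_mul] using
    ensemble_minor_bound_general hlam.2 hK0.nonneg hKlam ((↑) : T → Fin n)
end
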